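/- Self-loop detection via E-separation: for every directed graph G = (V, E_d) and every node v ∈ V whose strongly connected component is the singleton scc_G(v) = {v}, the self-loop (v, v) is absent from E_d if and only if ({v}, {v}, pa_G(v) \ {v}) ∈ I_E^G. -/

import Mathlib

namespace ESepPaper

/-- A directed mixed graph: directed edges and bidirected edges over a node type `V`.
A directed graph (DG) is a DMG with `Ebi = ∅`. -/
structure DMG (V : Type) where
  Ed : Set (V × V)
  Ebi : Set (Sym2 V)

variable {V : Type}

/-- `G.ancestor u v` : there is a directed path `u → … → v` (possibly trivial). -/
def DMG.ancestor (G : DMG V) : V → V → Prop :=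
  Relation.ReflTransGen (fun u v => (u, v) ∈ G.Ed)

/-- Ancestors of a set `C`. -/
def DMG.anc (G : DMG V) (C : Set V) : Set V := {u | ∃ v ∈ C, G.ancestor u v}

/-- Strongly connected component of `v`. -/
def DMG.scc (G : DMG V) (v : V) : Set V := {w | G.ancestor w v ∧ G.ancestor v w}

/-- Parents of a set of nodes. -/
def DMG.pa (G : DMG V) (S : Set V) : Set V := {w | ∃ v ∈ S, (w, v) ∈ G.Ed}

/-- Kind of a traversed edge on a walk: forward directed, backward directed, or bidirected. -/
inductive LinkType | fwd | bwd | bi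
deriving DecidableEq

/-- Validity of a link of kind `t` between consecutive walk nodes `u` and `v`. -/
def DMG.linkOK (G : DMG V) (u v : V) : LinkType → Prop
  | .fwd => (u, v) ∈ G.Ed
  | .bwd => (v, u) ∈ G.Ed
  | .bi => s(u, v) ∈ G.Ebi

/-- Arrowhead at the second (right) endpoint of the link. -/
def LinkType.headR : LinkType → Prop
  | .fwd => True
  | .bwd => False
  | .bi => True

/-- Arrowhead at the first (left) endpoint of the link. -/
def LinkType.headL : LinkType → Prop
  | .fwd => False
  | .bwd => True
  | .bi => True

/-- Tail at the second (right) endpoint. -/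
def LinkType.tailR (t : LinkType) : Prop := t = .bwd

/-- Tail at the first (left) endpoint. -/
def LinkType.tailL (t : LinkType) : Prop := t = .fwd

/-- Walks in a DMG. -/
inductive DMG.Walk (G : DMG V) : V → V → Type
  | nil (v : V) : DMG.Walk G v v
  | cons {u v w : V} (t : LinkType) (h : G.linkOK u v t) (p : DMG.Walk G v w) : DMG.Walk G u w

/-- An interior node on a walk, whose incoming link is `t1` and outgoing link is `t2`,
is a collider iff both links have an arrowhead at it. -/
def colliderAt (t1 t2 : LinkType) : Prop := t1.headR ∧ t2.headL

/-- An interior non-collider `v` between neighbours `u` (incoming link `t1`) and `w`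
(outgoing link `t2`) is unblockable: on every side where the link has a tail at `v`, the
corresponding neighbour lies in `scc_G(v)` (left-chain/right-chain/fork cases). -/
def unblockableAt (G : DMG V) (u v w : V) (t1 t2 : LinkType) : Prop :=
  (t1.tailR → u ∈ G.scc v) ∧ (t2.tailL → w ∈ G.scc v)

namespace DMG.Walk

variable {G : DMG V}

/-- First node of a walk. -/
def first {a b : V} (_ : G.Walk a b) : V := a

def length : {a b : V} → G.Walk a b → ℕ
  | _, _, .nil _ => 0
  | _, _, .cons _ _ p => p.length + 1

def support : {a b : V} → G.Walk a b → List V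
  | a, _, .nil _ => [a]
  | a, _, .cons _ _ p => a :: p.support

/-- Auxiliary: σ-openness of the remainder of a walk, where `u` is the previous node and
`t1` the link from `u` into the current first node. -/
def sigmaOpenAux (C : Set V) : (u : V) → LinkType → {b c : V} → G.Walk b c → Prop
  | _, _, _, _, .nil _ => True
  | u, t1, v, _, .cons t2 _ q =>
      ((colliderAt t1 t2 → v ∈ G.anc C) ∧
       (¬ colliderAt t1 t2 → ¬ unblockableAt G u v q.first t1 t2 → v ∉ C)) ∧
      sigmaOpenAux C v t2 q

/-- The walk is σ-open given `C`: every collider on it is an ancestor of a node of `C`, and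
no blockable non-collider on it lies in `C`. -/
def sigmaOpen (C : Set V) : {a b : V} → G.Walk a b → Prop
  | _, _, .nil _ => True
  | a, _, .cons t _ q => sigmaOpenAux C a t q

/-- All links are forward directed. -/
def IsDirected : {a b : V} → G.Walk a b → Prop
  | _, _, .nil _ => True
  | _, _, .cons t _ p => t = .fwd ∧ p.IsDirected

/-- Interior nodes of the walk (all nodes except the two endpoints). -/
def interior {a b : V} (p : G.Walk a b) : List V := p.support.tail.dropLast

/-- Arrowhead at the first endpoint. -/
def headAtStart : {a b : V} → G.Walk a b → Prop
  | _, _, .nil _ => False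
  | _, _, .cons t _ _ => t.headL

def headAtEndAux : LinkType → {a b : V} → G.Walk a b → Prop
  | t, _, _, .nil _ => t.headR
  | _, _, _, .cons t _ q => headAtEndAux t q

/-- Arrowhead at the last endpoint. -/
def headAtEnd : {a b : V} → G.Walk a b → Prop
  | _, _, .nil _ => False
  | _, _, .cons t _ q => headAtEndAux t q

def noCollidersAux : LinkType → {a b : V} → G.Walk a b → Prop
  | _, _, _, .nil _ => True
  | t1, _, _, .cons t2 _ q => ¬ colliderAt t1 t2 ∧ noCollidersAux t2 q

/-- There is no collider on the walk. -/
def NoColliders : {a b : V} → G.Walk a b → Prop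
  | _, _, .nil _ => True
  | _, _, .cons t _ q => noCollidersAux t q

def collidersInAux (S : Set V) : LinkType → {a b : V} → G.Walk a b → Prop
  | _, _, _, .nil _ => True
  | t1, v, _, .cons t2 _ q => (colliderAt t1 t2 → v ∈ S) ∧ collidersInAux S t2 q

/-- Every collider on the walk lies in `S`. -/
def CollidersIn (S : Set V) : {a b : V} → G.Walk a b → Prop
  | _, _, .nil _ => True
  | _, _, .cons t _ q => collidersInAux S t q

def noncollUnblAux : (u : V) → LinkType → {b c : V} → G.Walk b c → Prop
  | _, _, _, _, .nil _ => True
  | u, t1, v, _, .cons t2 _ q =>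
      (¬ colliderAt t1 t2 → unblockableAt G u v q.first t1 t2) ∧ noncollUnblAux v t2 q

/-- Every interior non-collider on the walk is unblockable. -/
def NoncollidersUnblockable : {a b : V} → G.Walk a b → Prop
  | _, _, .nil _ => True
  | a, _, .cons t _ q => noncollUnblAux a t q

/-- The set of edges occurring on a walk (directed edges as ordered pairs in `E_d`,
bidirected edges as unordered pairs). -/
def edges : {a b : V} → G.Walk a b → Set ((V × V) ⊕ Sym2 V)
  | _, _, .nil _ => ∅
  | a, _, .cons t _ p =>
      insert (match t with
        | .fwd => Sum.inl (a, p.first)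
        | .bwd => Sum.inl (p.first, a)
        | .bi => Sum.inr s(a, p.first)) p.edges

/-- Concatenation of walks. -/
def append : {a b c : V} → G.Walk a b → G.Walk b c → G.Walk a c
  | _, _, _, .nil _, q => q
  | _, _, _, .cons t h p, q => .cons t h (p.append q)

/-- A walk `v_0, …, v_{n+1}` is a path if no node besides the final endpoint occurs more
than once, i.e. `v_0, …, v_n` are pairwise distinct. -/
def IsPath {a b : V} (p : G.Walk a b) : Prop := p.support.dropLast.Nodup

end DMG.Walk

/-- `A` is σ-separated from `B` given `C` in `G`: every walk from a node of `A` to a node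
of `B` is σ-blocked given `C`. -/
def DMG.sigmaSep (G : DMG V) (A B C : Set V) : Prop :=
  ∀ a ∈ A, ∀ b ∈ B, ∀ p : G.Walk a b, ¬ p.sigmaOpen C

/-- The lifted dependency graph of `G`, on two copies of `V`
(`Sum.inl` is the past copy `V_0`, `Sum.inr` the future copy `V_1`). -/
def DMG.lift (G : DMG V) : DMG (V ⊕ V) where
  Ed := {e | ∃ u v, (u, v) ∈ G.Ed ∧
        (e = (Sum.inl u, Sum.inl v) ∨ e = (Sum.inl u, Sum.inr v) ∨
         e = (Sum.inr u, Sum.inr v))}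
  Ebi := {e | ∃ u v, s(u, v) ∈ G.Ebi ∧
        (e = s(Sum.inl u, Sum.inl v) ∨ e = s(Sum.inl u, Sum.inr v) ∨
         e = s(Sum.inr u, Sum.inl v) ∨ e = s(Sum.inr u, Sum.inr v))}

/-- `B` is E-separated from `A` given `C` in `G`:
`A_0` is σ-separated from `B_1` given `C_0 ∪ (C_1 \ B_1)` in the lifted dependency graph. -/
def DMG.ESep (G : DMG V) (A B C : Set V) : Prop :=
  G.lift.sigmaSep (Sum.inl '' A) (Sum.inr '' B)
    ((Sum.inl '' C) ∪ ((Sum.inr '' C) \ (Sum.inr '' B)))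

/-- The independence model `I_E^G` of E-separation triples. -/
def DMG.IE (G : DMG V) : Set (Set V × Set V × Set V) :=
  {t | G.ESep t.1 t.2.1 t.2.2}


/-- The latent projection of `G` onto the observed nodes `O`: a directed edge when there is
a non-trivial directed walk whose interior nodes are all latent, and a bidirected edge when
there is a non-trivial collider-free walk with arrowheads at both endpoints whose interior
nodes are all latent. -/
def DMG.latentProj (G : DMG V) (O : Set V) : DMG O where
  Ed := {e | ∃ p : G.Walk e.1.val e.2.val,
          p.IsDirected ∧ 0 < p.length ∧ ∀ x ∈ p.interior, x ∉ O}
  Ebi := {e | ∃ u v : O, e = s(u, v) ∧ ∃ p : G.Walk u.val v.val,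
          p.headAtStart ∧ p.headAtEnd ∧ p.NoColliders ∧ 0 < p.length ∧
          ∀ x ∈ p.interior, x ∉ O}

/-- The last edge of the walk `p` before entering `scc_G(w)` has an arrowhead at its
endpoint in `scc_G(w)` (vacuous if the walk never leaves `scc_G(w)`). -/
def DMG.lastEdgeInto (G : DMG V) {a b : V} (w : V) (p : G.Walk a b) : Prop :=
  (∀ x ∈ p.support, x ∈ G.scc w) ∨
  ∃ (x y : V) (t : LinkType) (h : G.linkOK x y t) (p₁ : G.Walk a x) (p₂ : G.Walk y b),
    p = p₁.append (.cons t h p₂) ∧ x ∉ G.scc w ∧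
    (∀ z ∈ p₂.support, z ∈ G.scc w) ∧ t.headR

/-- An (asymmetric) inducing path from `v` to `w`: a non-trivial path such that every
collider on it is an ancestor of `v` or `w`, every interior non-collider is unblockable,
and the last edge before entering `scc_G(w)` points into `scc_G(w)`. -/
def DMG.IsInducingPath (G : DMG V) {v w : V} (p : G.Walk v w) : Prop :=
  0 < p.length ∧ p.IsPath ∧
  p.CollidersIn (G.anc {v, w}) ∧ p.NoncollidersUnblockable ∧ G.lastEdgeInto w p

/-- Projection of the lifted node set. -/
def projN : V ⊕ V → V := Sum.elim id id

theorem lift_edge_proj {G : DMG V} {a b : V ⊕ V} (h : (a, b) ∈ G.lift.Ed) :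
    (projN a, projN b) ∈ G.Ed := by
  obtain ⟨u, w, huw, h | h | h⟩ := h <;>
  · rw [Prod.mk.injEq] at h
    obtain ⟨rfl, rfl⟩ := h
    exact huw

theorem lift_anc_proj {G : DMG V} {a b : V ⊕ V} (h : G.lift.ancestor a b) :
    G.ancestor (projN a) (projN b) := by
  induction h with
  | refl => exact Relation.ReflTransGen.refl
  | tail _ hbc ih => exact Relation.ReflTransGen.tail ih (lift_edge_proj hbc)

theorem lift_anc_inr {G : DMG V} {a : V} {b : V ⊕ V} (h : G.lift.ancestor (Sum.inr a) b) :
    ∃ y, b = Sum.inr y := by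
  induction h with
  | refl => exact ⟨_, rfl⟩
  | tail _ hbc ih =>
    obtain ⟨y, rfl⟩ := ih
    obtain ⟨u, w, _, h | h | h⟩ := hbc <;> rw [Prod.mk.injEq] at h
    · exact absurd h.1 (by simp)
    · exact absurd h.1 (by simp)
    · exact ⟨w, h.2⟩

theorem lift_no_bi {G : DMG V} (hG : G.Ebi = ∅) {a b : V ⊕ V}
    (h : G.lift.linkOK a b .bi) : False := by
  obtain ⟨u, w, h, _⟩ := h
  rw [hG] at h
  exact h

theorem key {G : DMG V} (hG : G.Ebi = ∅) {v : V} (hscc : G.scc v = {v})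
    (hl : (v, v) ∉ G.Ed) {C : Set (V ⊕ V)}
    (hC1 : ∀ x, (projN x, v) ∈ G.Ed → x ∈ C)
    (hC2 : ∀ x ∈ C, (projN x, v) ∈ G.Ed) {b e : V ⊕ V} (q : G.lift.Walk b e) :
    ∀ (_ : e = Sum.inr v) (u : V ⊕ V) (t1 : LinkType) (_ : G.lift.linkOK u b t1)
      (_ : q.sigmaOpenAux C u t1),
      (t1 = .bwd ∧ G.lift.ancestor (Sum.inr v) b) ∨ (t1 = .fwd ∧ b = Sum.inr v) := by
  have hs : ∀ y, G.ancestor y v → G.ancestor v y → y = v := by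
    intro y h1 h2
    have : y ∈ G.scc v := ⟨h1, h2⟩
    rw [hscc] at this
    exact this
  induction q with
  | nil w =>
    rintro rfl u t1 hu _
    cases t1 with
    | fwd => exact Or.inr ⟨rfl, rfl⟩
    | bwd => exact Or.inl ⟨rfl, Relation.ReflTransGen.refl⟩
    | bi => exact (lift_no_bi hG hu).elim
  | @cons b c e t2 h q ih =>
    rintro rfl u t1 hu ho
    obtain ⟨⟨ho1, ho2⟩, ho3⟩ := ho
    rcases ih rfl b t2 h ho3 with ⟨rfl, hc⟩ | ⟨rfl, rfl⟩
    · have hcb : (c, b) ∈ G.lift.Ed := h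
      cases t1 with
      | bi => exact (lift_no_bi hG hu).elim
      | bwd => exact Or.inl ⟨rfl, Relation.ReflTransGen.tail hc hcb⟩
      | fwd =>
        exfalso
        obtain ⟨d, hd, hbd⟩ := ho1 ⟨trivial, trivial⟩
        have h1 : G.ancestor (projN b) v :=
          Relation.ReflTransGen.tail (lift_anc_proj hbd) (hC2 d hd)
        have hc' : G.ancestor v (projN c) := lift_anc_proj hc
        have e0 := lift_edge_proj hcb
        have e1 : projN b = v := hs _ h1 (Relation.ReflTransGen.tail hc' e0)
        have e2 : projN c = v := hs _ (Relation.ReflTransGen.head e0 h1) hc'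
        rw [e1, e2] at e0
        exact hl e0
    · exfalso
      have hbe : (projN b, v) ∈ G.Ed := lift_edge_proj h
      refine ho2 (fun hh => hh.2) ?_ (hC1 b hbe)
      intro hun
      have h3 : Sum.inr v ∈ G.lift.scc b := hun.2 rfl
      have e1 : projN b = v :=
        hs _ (Relation.ReflTransGen.single hbe) (lift_anc_proj h3.1)
      rw [e1] at hbe
      exact hl hbe

/-- Self-loop detection via E-separation for nodes whose strongly connected component is a
singleton. -/
theorem self_loop_detection {V : Type} [Fintype V] (G : DMG V) (hG : G.Ebi = ∅)
    (v : V) (hscc : G.scc v = {v}) :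
    (v, v) ∉ G.Ed ↔ (({v} : Set V), ({v} : Set V), G.pa {v} \ {v}) ∈ G.IE := by
  constructor
  · intro hl
    suffices main : ∀ p : G.lift.Walk (Sum.inl v) (Sum.inr v), ¬ p.sigmaOpen
        ((Sum.inl '' (G.pa {v} \ {v})) ∪
          ((Sum.inr '' (G.pa {v} \ {v})) \ (Sum.inr '' {v}))) by
      rintro a ⟨_, rfl, rfl⟩ b ⟨_, rfl, rfl⟩ p hp
      exact main p hp
    intro p hp
    have hne : ∀ x, (x, v) ∈ G.Ed → x ≠ v := by
      rintro x hx rfl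
      exact hl hx
    cases p with
    | @cons _ c _ t h q =>
      have hk := key hG hscc hl (C := (Sum.inl '' (G.pa {v} \ {v})) ∪
          ((Sum.inr '' (G.pa {v} \ {v})) \ (Sum.inr '' {v}))) (by
        rintro (x | x) hx
        · exact Or.inl ⟨x, ⟨⟨_, rfl, hx⟩, hne x hx⟩, rfl⟩
        · refine Or.inr ⟨⟨x, ⟨⟨_, rfl, hx⟩, hne x hx⟩, rfl⟩, ?_⟩
          rintro ⟨y, hy, hyx⟩
          exact hne x hx ((Sum.inr.inj hyx).symm.trans hy)) (by
        rintro _ (⟨x, ⟨⟨_, rfl, hx⟩, _⟩, rfl⟩ | ⟨⟨x, ⟨⟨_, rfl, hx⟩, _⟩, rfl⟩, _⟩) <;> exact hx)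
        q rfl _ t h hp
      rcases hk with ⟨rfl, hc⟩ | ⟨rfl, rfl⟩
      · have h' : (c, Sum.inl _) ∈ G.lift.Ed := h
        obtain ⟨y, hy⟩ := lift_anc_inr (Relation.ReflTransGen.tail hc h')
        exact absurd hy (by simp)
      · exact hl (lift_edge_proj h)
  · intro h hl
    exact h (Sum.inl v) ⟨v, rfl, rfl⟩ (Sum.inr v) ⟨v, rfl, rfl⟩
      (.cons .fwd ⟨v, v, hl, Or.inr (Or.inl rfl)⟩ (.nil _)) trivial

end ESepPaper
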